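/- Let q be a prime, r ≥ 1 an integer, and n = q^{2r}. Then for 0 ≤ i ≤ 2r, Y[n, q^i] = q^r·φ(q^i) if 0 ≤ i ≤ r, and Y[n, q^i] = 0 if r+1 ≤ i ≤ 2r. -/

import Mathlib

/-- The Ramanujan sum `c_d(r)`: the sum of the `r`-th powers of all primitive
`d`-th roots of unity. -/
noncomputable def ramanujanSum (d r : ℕ) : ℂ :=
  ∑ m ∈ (Finset.range d).filter (fun m => Nat.gcd m d = 1),
    Complex.exp (2 * Real.pi * Complex.I * ((m : ℂ) * (r : ℂ) / (d : ℂ)))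

/-- `Y[n,k] = ∑_{d ∣ n} c_k(n/d) · c_d(n/d)`. -/
noncomputable def Y (n k : ℕ) : ℂ :=
  ∑ d ∈ n.divisors, ramanujanSum k (n / d) * ramanujanSum d (n / d)

/-!
Let `n = m ^ 2` and `d, k ∣ n`.

* `c_d(a) = 0` unless `d ∣ rad(d) a`, because translation by `rad(d)`, which is nilpotent modulo
  `d`, permutes the units. As `rad(d)` is squarefree, `c_d(n / d)` vanishes unless `d ∣ m`, and then
  it equals `φ(d)`. So `Y[n, k]` is the sum of `φ(d) c_k(n / d)` over `d ∣ m`.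
* `φ(d) c_k(n / d) = φ(k) c_d(n / k)`: multiplied by `φ(n)`, both sides are `φ(d) φ(k)` times the
  sum of `exp(2πi u n / (d k))` over the units `u` modulo `n`.
* The sum of `c_d(n / k)` over `d ∣ m` is a power sum over all `m`-th roots of unity, so it is `m`
  if `m ∣ n / k`, that is, if `k ∣ m`, and `0` otherwise.
-/

open Finset UniqueFactorizationMonoid

theorem dvd_of_sq_dvd_mul_sq_of_squarefree {α : Type*} [CommMonoidWithZero α] [GCDMonoid α]
    {d m s : α} (hs : Squarefree s) (h : d ^ 2 ∣ s * m ^ 2) : d ∣ m := by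
  obtain rfl | hm := eq_or_ne m 0
  · exact dvd_zero d
  obtain ⟨d', m', hd', hm', hcoprime⟩ := extract_gcd d m
  have hgcd : gcd d m ^ 2 ≠ 0 := pow_ne_zero 2 (gcd_ne_zero_of_right hm)
  have hdvd : d' ^ 2 ∣ s * m' ^ 2 := by
    rw [← mul_dvd_mul_iff_left hgcd]
    rwa [← mul_pow, ← hd', mul_left_comm, ← mul_pow, ← hm']
  have hrel : IsRelPrime (d' ^ 2) (m' ^ 2) := (gcd_isUnit_iff_isRelPrime.mp hcoprime).pow
  have hunit : IsUnit d' := hs d' (sq d' ▸ hrel.dvd_of_dvd_mul_right hdvd)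
  rw [hd', hunit.mul_right_dvd]
  exact gcd_dvd_right d m

theorem card_nsmul_sum_comp_monoidHom_of_surjective {G H M : Type*} [Group G] [Group H] [Fintype G]
    [Fintype H] [AddCommMonoid M] (g : G →* H) (hg : Function.Surjective g) (f : H → M) :
    Fintype.card H • ∑ x, f (g x) = Fintype.card G • ∑ y, f y := by
  have sum_mul_right (y : H) : ∑ x, f (g x * y) = ∑ x, f (g x) := by
    obtain ⟨z, rfl⟩ := hg y
    simpa only [Equiv.coe_mulRight, map_mul] using Equiv.sum_comp (Equiv.mulRight z) fun x ↦ f (g x)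
  calc Fintype.card H • ∑ x, f (g x) = ∑ y, ∑ x, f (g x * y) := by
        simp only [sum_mul_right, sum_const, card_univ]
    _ = ∑ x, ∑ y, f (g x * y) := sum_comm
    _ = Fintype.card G • ∑ y, f y := by
        have sum_mul_left (x : G) : ∑ y, f (g x * y) = ∑ y, f y :=
          Equiv.sum_comp (Equiv.mulLeft (g x)) f
        simp only [sum_mul_left, sum_const, card_univ]

theorem sum_units_addChar_mul_eq_zero {R K : Type*} [CommRing R] [Fintype Rˣ] [CommRing K]
    [IsDomain K] (ψ : AddChar R K) {s r : R} (hs : IsNilpotent s) (hsr : ψ (s * r) ≠ 1) :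
    ∑ u : Rˣ, ψ (u * r) = 0 := by
  have isUnit_add (u : Rˣ) : IsUnit (u + s) :=
    hs.isUnit_add_left_of_commute u.isUnit (Commute.all _ _)
  have shift_bijective : Function.Bijective fun u ↦ (isUnit_add u).unit :=
    Function.Injective.bijective_of_finite fun u v huv ↦ by simpa [Units.ext_iff] using huv
  have hshift : ∑ u : Rˣ, ψ (u * r) = ψ (s * r) * ∑ u : Rˣ, ψ (u * r) := by
    rw [mul_sum]
    refine (shift_bijective.sum_comp fun u : Rˣ ↦ ψ (u * r)).symm.trans ?_
    refine sum_congr rfl fun u _ ↦ ?_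
    rw [IsUnit.unit_spec, add_mul, AddChar.map_add_eq_mul, mul_comm]
  exact (mul_left_eq_self₀.mp hshift.symm).resolve_left hsr

theorem sum_nthRootsFinset_pow {K : Type*} [CommRing K] [IsDomain K] {ω : K} {n : ℕ} [NeZero n]
    (hω : IsPrimitiveRoot ω n) (r : ℕ) :
    ∑ ζ ∈ Polynomial.nthRootsFinset n (1 : K), ζ ^ r = if n ∣ r then (n : K) else 0 := by
  have mem_iff {ζ : K} : ζ ∈ Polynomial.nthRootsFinset n (1 : K) ↔ ζ ^ n = 1 :=
    Polynomial.mem_nthRootsFinset (NeZero.pos n) 1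
  split_ifs with hr
  · obtain ⟨t, rfl⟩ := hr
    have pow_eq_one : ∀ ζ ∈ Polynomial.nthRootsFinset n (1 : K), ζ ^ (n * t) = 1 := fun ζ hζ ↦ by
      rw [pow_mul, mem_iff.mp hζ, one_pow]
    rw [sum_congr rfl pow_eq_one, sum_const, hω.card_nthRootsFinset, nsmul_one]
  · have hω0 : ω ≠ 0 := hω.ne_zero (NeZero.ne n)
    have hrotate : ω ^ r * ∑ ζ ∈ Polynomial.nthRootsFinset n (1 : K), ζ ^ r =
        ∑ ζ ∈ Polynomial.nthRootsFinset n (1 : K), ζ ^ r := by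
      rw [mul_sum]
      refine sum_bij (fun ζ _ ↦ ω * ζ) (fun ζ hζ ↦ ?_) (fun _ _ _ _ h ↦ mul_left_cancel₀ hω0 h)
        (fun ζ hζ ↦ ⟨ω ^ (n - 1) * ζ, ?_, ?_⟩) fun ζ _ ↦ (mul_pow ω ζ r).symm
      · rw [mem_iff, mul_pow, hω.pow_eq_one, one_mul, mem_iff.mp hζ]
      · rw [mem_iff, mul_pow, pow_right_comm, hω.pow_eq_one, one_pow, one_mul, mem_iff.mp hζ]
      · rw [← mul_assoc, mul_pow_sub_one (NeZero.ne n), hω.pow_eq_one, one_mul]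
    exact (mul_left_eq_self₀.mp hrotate).resolve_left fun h ↦ hr ((hω.pow_eq_one_iff_dvd r).mp h)

theorem ramanujanSum_eq_sum_primitiveRoots (d r : ℕ) [NeZero d] :
    ramanujanSum d r = ∑ ζ ∈ primitiveRoots d ℂ, ζ ^ r := by
  set ω := Complex.exp (2 * Real.pi * Complex.I / d)
  have hω : IsPrimitiveRoot ω d := Complex.isPrimitiveRoot_exp d (NeZero.ne d)
  refine sum_bij (fun m _ ↦ ω ^ m) ?_ ?_ ?_ ?_
  · intro m hm
    rw [mem_primitiveRoots (NeZero.pos d)]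
    exact hω.pow_of_coprime m (mem_filter.mp hm).2
  · intro m hm m' hm' heq
    simp only [mem_filter, mem_range] at hm hm'
    exact hω.pow_inj hm.1 hm'.1 heq
  · intro ζ hζ
    rw [mem_primitiveRoots (NeZero.pos d), hω.isPrimitiveRoot_iff] at hζ
    obtain ⟨m, hmd, hm, rfl⟩ := hζ
    exact ⟨m, mem_filter.mpr ⟨mem_range.mpr hmd, hm⟩, rfl⟩
  · intro m _
    rw [← pow_mul, ← Complex.exp_nat_mul]
    push_cast
    ring_nf

theorem ramanujanSum_eq_sum_units (d r : ℕ) [NeZero d] :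
    ramanujanSum d r = ∑ u : (ZMod d)ˣ, ZMod.stdAddChar (u * r : ZMod d) := by
  have stdAddChar_eq_exp (m : ℕ) : ZMod.stdAddChar (m * r : ZMod d) =
      Complex.exp (2 * Real.pi * Complex.I * (m * r / d)) := by
    simpa [mul_div_assoc] using ZMod.stdAddChar_coe (N := d) (m * r)
  symm
  refine sum_bij (fun u _ ↦ (u : ZMod d).val) ?_ ?_ ?_ ?_
  · intro u _
    exact mem_filter.mpr ⟨mem_range.mpr (ZMod.val_lt _), ZMod.val_coe_unit_coprime u⟩
  · intro u _ v _ huv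
    exact Units.ext (ZMod.val_injective d huv)
  · intro m hm
    simp only [mem_filter, mem_range] at hm
    exact ⟨ZMod.unitOfCoprime m hm.2, mem_univ _, by simp [ZMod.val_natCast, Nat.mod_eq_of_lt hm.1]⟩
  · intro u _
    rw [← stdAddChar_eq_exp, ZMod.natCast_zmod_val]

theorem ramanujanSum_of_dvd {d r : ℕ} (h : d ∣ r) : ramanujanSum d r = d.totient := by
  obtain rfl | hd := eq_or_ne d 0
  · simp [ramanujanSum]
  have : NeZero d := ⟨hd⟩
  simp [ramanujanSum_eq_sum_units, (ZMod.natCast_eq_zero_iff r d).mpr h, ZMod.card_units_eq_totient]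

theorem ramanujanSum_eq_zero_of_not_dvd_radical_mul {d r : ℕ} (h : ¬ d ∣ radical d * r) :
    ramanujanSum d r = 0 := by
  obtain rfl | hd := eq_or_ne d 0
  · simp [ramanujanSum]
  have : NeZero d := ⟨hd⟩
  have hnil : IsNilpotent ((radical d : ℕ) : ZMod d) := by
    obtain ⟨n, hn⟩ := exists_dvd_radical_self_pow hd
    exact ⟨n, by exact_mod_cast (ZMod.natCast_eq_zero_iff _ d).mpr hn⟩
  rw [ramanujanSum_eq_sum_units]
  refine sum_units_addChar_mul_eq_zero _ hnil fun hone ↦ h ?_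
  rw [← ZMod.natCast_eq_zero_iff]
  apply ZMod.injective_stdAddChar
  simpa using hone

theorem stdAddChar_mul_natCast {k t : ℕ} [NeZero k] [NeZero t] (x : ZMod (k * t)) :
    ZMod.stdAddChar (x * (t : ZMod (k * t))) =
      ZMod.stdAddChar (ZMod.castHom (dvd_mul_right k t) (ZMod k) x) := by
  obtain ⟨j, rfl⟩ := ZMod.intCast_surjective x
  have hxt : (j * t : ZMod (k * t)) = ((j * t : ℤ) : ZMod (k * t)) := by push_cast; rfl
  have ht : (t : ℂ) ≠ 0 := NeZero.ne _
  rw [hxt, map_intCast (ZMod.castHom (dvd_mul_right k t) (ZMod k)),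
    ZMod.stdAddChar_coe, ZMod.stdAddChar_coe]
  push_cast
  rw [← mul_assoc, mul_div_mul_right _ _ ht]

theorem totient_mul_ramanujanSum_mul_mul_right (k r t : ℕ) :
    (k.totient : ℂ) * ramanujanSum (k * t) (r * t) = (k * t).totient * ramanujanSum k r := by
  obtain rfl | hk := eq_or_ne k 0
  · simp
  obtain rfl | ht := eq_or_ne t 0
  · simp [ramanujanSum]
  have : NeZero k := ⟨hk⟩
  have : NeZero t := ⟨ht⟩
  have stdAddChar_unitsMap (u : (ZMod (k * t))ˣ) :
      ZMod.stdAddChar (u * (r * t : ℕ) : ZMod (k * t)) =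
        ZMod.stdAddChar (ZMod.unitsMap (dvd_mul_right k t) u * r : ZMod k) := by
    rw [Nat.cast_mul, ← mul_assoc, stdAddChar_mul_natCast, map_mul, map_natCast]
    rfl
  have hsum := card_nsmul_sum_comp_monoidHom_of_surjective (ZMod.unitsMap (dvd_mul_right k t))
    (ZMod.unitsMap_surjective _) fun v ↦ ZMod.stdAddChar (v * r : ZMod k)
  simpa only [ramanujanSum_eq_sum_units, stdAddChar_unitsMap, nsmul_eq_mul,
    ZMod.card_units_eq_totient] using hsum

theorem totient_mul_ramanujanSum_div_comm {n d k : ℕ} (hd : d ∣ n) (hk : k ∣ n) :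
    (d.totient : ℂ) * ramanujanSum k (n / d) = k.totient * ramanujanSum d (n / k) := by
  obtain rfl | hn := eq_or_ne n 0
  · simp only [Nat.zero_div, ramanujanSum_of_dvd (dvd_zero _), mul_comm]
  have hk_lift := totient_mul_ramanujanSum_mul_mul_right k (n / d) (n / k)
  have hd_lift := totient_mul_ramanujanSum_mul_mul_right d (n / k) (n / d)
  rw [Nat.mul_div_cancel' hk] at hk_lift
  rw [Nat.mul_div_cancel' hd, mul_comm (n / k)] at hd_lift
  have htotient : (n.totient : ℂ) ≠ 0 :=
    Nat.cast_ne_zero.mpr (Nat.totient_pos.mpr (Nat.pos_of_ne_zero hn)).ne'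
  refine mul_left_cancel₀ htotient ?_
  linear_combination (-(d.totient : ℂ)) * hk_lift + (k.totient : ℂ) * hd_lift

theorem sum_divisors_ramanujanSum {n : ℕ} (hn : n ≠ 0) (r : ℕ) :
    ∑ d ∈ n.divisors, ramanujanSum d r = if n ∣ r then (n : ℂ) else 0 := by
  have : NeZero n := ⟨hn⟩
  rw [← sum_nthRootsFinset_pow (Complex.isPrimitiveRoot_exp n hn),
    IsPrimitiveRoot.nthRoots_one_eq_biUnion_primitiveRoots,
    sum_biUnion fun _ _ _ _ hne ↦ IsPrimitiveRoot.disjoint hne]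
  refine sum_congr rfl fun d hd ↦ ?_
  have : NeZero d := ⟨(Nat.pos_of_mem_divisors hd).ne'⟩
  exact ramanujanSum_eq_sum_primitiveRoots d r

theorem ramanujanSum_sq_div_self {m d : ℕ} (hd : d ∣ m ^ 2) :
    ramanujanSum d (m ^ 2 / d) = if d ∣ m then (d.totient : ℂ) else 0 := by
  split_ifs with hdm
  · exact ramanujanSum_of_dvd
      ((Nat.dvd_div_iff_mul_dvd hd).mpr (sq m ▸ mul_dvd_mul hdm hdm))
  · refine ramanujanSum_eq_zero_of_not_dvd_radical_mul fun h ↦ hdm ?_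
    refine dvd_of_sq_dvd_mul_sq_of_squarefree (squarefree_radical (a := d)) ?_
    rw [sq d, ← Nat.div_mul_cancel hd, ← mul_assoc]
    exact mul_dvd_mul_right h d

theorem stmt_16_general {m k : ℕ} (hm : m ≠ 0) (hk : k ∣ m ^ 2) :
    Y (m ^ 2) k = if k ∣ m then (m : ℂ) * k.totient else 0 := by
  have hmm : m ∣ m ^ 2 := dvd_pow_self m two_ne_zero
  calc Y (m ^ 2) k
      = ∑ d ∈ (m ^ 2).divisors, if d ∣ m then d.totient * ramanujanSum k (m ^ 2 / d) else 0 :=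
        sum_congr rfl fun d hd ↦ by
          rw [ramanujanSum_sq_div_self (Nat.dvd_of_mem_divisors hd), mul_ite, mul_zero, mul_comm]
    _ = ∑ d ∈ m.divisors, d.totient * ramanujanSum k (m ^ 2 / d) := by
        rw [← sum_filter, Nat.divisors_filter_dvd_of_dvd (pow_ne_zero 2 hm) hmm]
    _ = k.totient * ∑ d ∈ m.divisors, ramanujanSum d (m ^ 2 / k) := by
        rw [mul_sum]
        exact sum_congr rfl fun d hd ↦
          totient_mul_ramanujanSum_div_comm ((Nat.dvd_of_mem_divisors hd).trans hmm) hk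
    _ = if k ∣ m then (m : ℂ) * k.totient else 0 := by
        have hdvd : m ∣ m ^ 2 / k ↔ k ∣ m := by
          rw [Nat.dvd_div_iff_mul_dvd hk, sq, Nat.mul_dvd_mul_iff_right (Nat.pos_of_ne_zero hm)]
        rw [sum_divisors_ramanujanSum hm, mul_ite, mul_zero, mul_comm]
        simp only [hdvd]

theorem stmt_16 (q : ℕ) (hq : q.Prime) (r : ℕ) (hr : 1 ≤ r) (i : ℕ) (hi : i ≤ 2 * r) :
    Y (q ^ (2 * r)) (q ^ i) =
      if i ≤ r then (q : ℂ) ^ r * (Nat.totient (q ^ i) : ℂ) else 0 := by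
  have hdvd : q ^ i ∣ (q ^ r) ^ 2 := pow_mul' q 2 r ▸ pow_dvd_pow q hi
  rw [pow_mul', stmt_16_general (pow_ne_zero r hq.ne_zero) hdvd]
  simp only [Nat.pow_dvd_pow_iff_le_right hq.one_lt, Nat.cast_pow]
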